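/- Let Ω ⊆ ℝ² be open, let g, σ : Ω → (symmetric real 2×2 matrices) be C² with g(x) positive definite for all x, and let p ∈ Ω satisfy g(p) = I and ∂_k g_{ij}(p) = 0 for all i, j, k. Define tr_g σ = g^{ij} σ_{ij}, S_g σ = σ − (tr_g σ) g, raised components σ^{ij} = g^{ik} σ_{kl} g^{lj}, the covariant divergence of a matrix field (div_g σ)^i = ∂_j σ^{ij} + Γ^i_{lj} σ^{lj} + Γ^j_{jl} σ^{il}, and the covariant divergence of a vector field div_g v = (det g)^{−1/2} ∂_i ( √(det g) · v^i ). Then ( div_g div_g S_g σ )(p) = −inc σ(p) + ½ tr(σ(p)) · inc g(p), and consequently ( div_g div_g S_g σ )(p) = −(inc_g σ)(p). -/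

import Mathlib

noncomputable section

open Matrix BigOperators

abbrev Vec2 := Fin 2 → ℝ
abbrev Mat2 := Matrix (Fin 2) (Fin 2) ℝ

/-- The two-dimensional alternating symbol: `eps2 0 1 = 1`, `eps2 1 0 = -1`, `eps2 i i = 0`. -/
def eps2 (i j : Fin 2) : ℝ := (j.1 : ℝ) - (i.1 : ℝ)

/-- Euclidean rotated normal `ν = (-τ², τ¹)` of a vector `τ`. -/
def rot2 (τ : Vec2) : Vec2 := ![-(τ 1), τ 0]

/-- The `g`-rotated normal `ν̃^k = -g^{kj} ε_{ji} τ^i`. -/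
def gNormal (g : Mat2) (τ : Vec2) : Vec2 :=
  fun k => -∑ j, ∑ i, g⁻¹ k j * eps2 j i * τ i

/-- The `g`-unit tangent `τ̂ = τ / √(τᵀ g τ)`. -/
def gUnitTangent (g : Mat2) (τ : Vec2) : Vec2 :=
  (Real.sqrt (τ ⬝ᵥ g.mulVec τ))⁻¹ • τ

/-- The `g`-unit normal `n̂ = ν̃ / √(ν̃ᵀ g ν̃)`. -/
def gUnitNormal (g : Mat2) (τ : Vec2) : Vec2 :=
  (Real.sqrt (gNormal g τ ⬝ᵥ g.mulVec (gNormal g τ)))⁻¹ • gNormal g τ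

/-- Partial derivative `∂_i f (x)`. -/
def pd (i : Fin 2) (f : Vec2 → ℝ) (x : Vec2) : ℝ := fderiv ℝ f x (Pi.single i 1)

/-- Christoffel symbol of the first kind `Γ_{ijl} = ½(∂_i g_{jl} + ∂_j g_{li} - ∂_l g_{ij})`. -/
def Gamma1 (g : Vec2 → Mat2) (x : Vec2) (i j l : Fin 2) : ℝ :=
  (pd i (fun y => g y j l) x + pd j (fun y => g y l i) x - pd l (fun y => g y i j) x) / 2

/-- Christoffel symbol of the second kind `Γ^k_{ij} = g^{kl} Γ_{ijl}`. -/
def Gamma2 (g : Vec2 → Mat2) (x : Vec2) (i j k : Fin 2) : ℝ :=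
  ∑ l, (g x)⁻¹ k l * Gamma1 g x i j l

/-- Euclidean incompatibility `inc σ = ∂₁∂₁σ₂₂ - 2 ∂₁∂₂σ₁₂ + ∂₂∂₂σ₁₁`. -/
def incE (σ : Vec2 → Mat2) (x : Vec2) : ℝ :=
  pd 0 (pd 0 (fun y => σ y 1 1)) x - 2 * pd 0 (pd 1 (fun y => σ y 0 1)) x
    + pd 1 (pd 1 (fun y => σ y 0 0)) x

/-- Covariant curl `(curl_g σ)_i = (det g)^{-1/2} ε^{jk}(∂_j σ_{ik} - Γ^m_{ji} σ_{mk})`. -/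
def curlg (g σ : Vec2 → Mat2) (x : Vec2) (i : Fin 2) : ℝ :=
  (Real.sqrt (g x).det)⁻¹ * ∑ j, ∑ k, eps2 j k *
    (pd j (fun y => σ y i k) x - ∑ m, Gamma2 g x j i m * σ x m k)

/-- Covariant incompatibility `inc_g σ`. -/
def incg (g σ : Vec2 → Mat2) (x : Vec2) : ℝ :=
  ((g x).det)⁻¹ *
    ((∑ q, ∑ i, ∑ j, ∑ k, eps2 q i * eps2 j k * pd j (pd q (fun y => σ y i k)) x)
      - (∑ q, ∑ i, ∑ j, ∑ k, eps2 q i * eps2 j k *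
          pd q (fun y => ∑ m, Gamma2 g y j i m * σ y m k) x)
      - (∑ q, ∑ i, ∑ j, ∑ k, (∑ l, Gamma2 g x l q l) * eps2 q i * eps2 j k *
          (pd j (fun y => σ y i k) x - ∑ m, Gamma2 g x j i m * σ x m k)))

/-- Coordinate Riemann component `R₁₂₂₁ = ∂₁Γ₂₂₁ - ∂₂Γ₁₂₁ - Γ₁₁ₚΓᵖ₂₂ + Γ₂₁ₚΓᵖ₁₂`. -/
def R1221 (g : Vec2 → Mat2) (x : Vec2) : ℝ :=
  pd 0 (fun y => Gamma1 g y 1 1 0) x - pd 1 (fun y => Gamma1 g y 0 1 0) x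
    - (∑ p, Gamma1 g x 0 0 p * Gamma2 g x 1 1 p)
    + (∑ p, Gamma1 g x 1 0 p * Gamma2 g x 0 1 p)

/-- `tr_g σ = g^{ij} σ_{ij}`. -/
def trg (g σ : Vec2 → Mat2) (x : Vec2) : ℝ := ∑ i, ∑ j, (g x)⁻¹ i j * σ x i j

/-- Raised components `(S_g σ)^{ij} = g^{ik}(σ - (tr_g σ) g)_{kl} g^{lj}`. -/
def SgUp (g σ : Vec2 → Mat2) (x : Vec2) (i j : Fin 2) : ℝ :=
  ∑ k, ∑ l, (g x)⁻¹ i k * (σ x k l - trg g σ x * g x k l) * (g x)⁻¹ l j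

/-- Covariant divergence `(div_g S_g σ)^i = ∂_j S^{ij} + Γ^i_{lj} S^{lj} + Γ^j_{jl} S^{il}`. -/
def divgSg (g σ : Vec2 → Mat2) (x : Vec2) (i : Fin 2) : ℝ :=
  (∑ j, pd j (fun y => SgUp g σ y i j) x)
    + (∑ l, ∑ j, Gamma2 g x l j i * SgUp g σ x l j)
    + ∑ j, ∑ l, Gamma2 g x j l j * SgUp g σ x i l

/-- Covariant divergence of the vector field `div_g S_g σ`:
`div_g v = (det g)^{-1/2} ∂_i (√(det g) v^i)`. -/
def divgdivgSg (g σ : Vec2 → Mat2) (x : Vec2) : ℝ :=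
  (Real.sqrt (g x).det)⁻¹ *
    ∑ i, pd i (fun y => Real.sqrt (g y).det * divgSg g σ y i) x

/-!
For `2 × 2` matrices Cayley–Hamilton reads `A - tr A = -adj A`. With `A = g⁻¹ σ` it shows that the
raised components of `S_g σ` are `-(det g)⁻¹ adj σ`. Since `Γ` is torsion-free and
`∂_k √(det g) = √(det g) Γ^l_{lk}`, it follows that
`√(det g) (div_g S_g σ)^i = -ε^{ij} (curl_g σ)_j`. On the other hand
`inc_g σ = (det g)^{-1/2} ε^{qi} ∂_q (curl_g σ)_i`, so one more divergence gives
`div_g div_g S_g σ = -inc_g σ` at every point. Where the first derivatives of `g` vanish, so do the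
Christoffel symbols, and only their derivatives contribute to `inc_g σ` beyond `inc σ`; these are
linear in the second derivatives of `g`, and their alternation is a multiple of `inc g`.
-/

open Filter Topology

section PartialDerivatives

variable {f h : Vec2 → ℝ} {x : Vec2} {i : Fin 2}

lemma pd_congr (e : f =ᶠ[𝓝 x] h) : pd i f x = pd i h x := by
  rw [pd, pd, e.fderiv_eq]

lemma pd_add (hf : DifferentiableAt ℝ f x) (hh : DifferentiableAt ℝ h x) :
    pd i (fun y => f y + h y) x = pd i f x + pd i h x := by
  rw [pd, fderiv_fun_add hf hh]; rfl

lemma pd_sub (hf : DifferentiableAt ℝ f x) (hh : DifferentiableAt ℝ h x) :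
    pd i (fun y => f y - h y) x = pd i f x - pd i h x := by
  rw [pd, fderiv_fun_sub hf hh]; rfl

lemma pd_neg : pd i (fun y => -f y) x = -pd i f x := by
  rw [pd, fderiv_fun_neg]; rfl

lemma pd_mul (hf : DifferentiableAt ℝ f x) (hh : DifferentiableAt ℝ h x) :
    pd i (fun y => f y * h y) x = f x * pd i h x + pd i f x * h x := by
  rw [pd, fderiv_fun_mul hf hh]
  simp [pd, mul_comm]

lemma pd_const_mul (c : ℝ) (hf : DifferentiableAt ℝ f x) :
    pd i (fun y => c * f y) x = c * pd i f x := by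
  rw [pd, fderiv_const_mul hf]; rfl

lemma pd_sum {ι : Type*} {s : Finset ι} {F : ι → Vec2 → ℝ}
    (hF : ∀ k ∈ s, DifferentiableAt ℝ (F k) x) :
    pd i (fun y => ∑ k ∈ s, F k y) x = ∑ k ∈ s, pd i (F k) x := by
  rw [pd, fderiv_fun_sum hF, _root_.sum_apply]; rfl

lemma pd_comp {φ : ℝ → ℝ} {φ' : ℝ} (hφ : HasDerivAt φ φ' (f x)) (hf : DifferentiableAt ℝ f x) :
    pd i (fun y => φ (f y)) x = φ' * pd i f x := by
  have hφf : HasFDerivAt (fun y => φ (f y)) (φ' • fderiv ℝ f x) x :=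
    hφ.comp_hasFDerivAt x hf.hasFDerivAt
  rw [pd, hφf.fderiv]; rfl

lemma differentiableAt_pd (hf : ContDiffAt ℝ 2 f x) : DifferentiableAt ℝ (pd i f) x :=
  ((hf.fderiv_right (m := 1) (by norm_num)).differentiableAt (by norm_num)).clm_apply
    (differentiableAt_const _)

lemma pd_pd_eq_fderiv_fderiv (hf : ContDiffAt ℝ 2 f x) (i j : Fin 2) :
    pd i (pd j f) x = fderiv ℝ (fderiv ℝ f) x (Pi.single i 1) (Pi.single j 1) := by
  have hdf : DifferentiableAt ℝ (fderiv ℝ f) x :=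
    (hf.fderiv_right (m := 1) (by norm_num)).differentiableAt (by norm_num)
  change fderiv ℝ (fun y => fderiv ℝ f y (Pi.single j 1)) x (Pi.single i 1) = _
  rw [fderiv_clm_apply hdf (differentiableAt_const _)]
  simp

lemma pd_comm (hf : ContDiffAt ℝ 2 f x) (i j : Fin 2) :
    pd i (pd j f) x = pd j (pd i f) x := by
  rw [pd_pd_eq_fderiv_fderiv hf, pd_pd_eq_fderiv_fderiv hf]
  exact hf.isSymmSndFDerivAt (by simp) _ _

end PartialDerivatives

section MatrixAlgebra

lemma trg_eq_trace {g σ : Vec2 → Mat2} {x : Vec2} (hg : (g x).IsSymm) :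
    trg g σ x = ((g x)⁻¹ * σ x).trace := by
  simp only [trg, trace, diag_apply, mul_apply]
  rw [Finset.sum_comm]
  simp only [hg.inv.apply]

lemma sub_trace_smul_one_eq_neg_adjugate {R : Type*} [CommRing R] (A : Matrix (Fin 2) (Fin 2) R) :
    A - A.trace • (1 : Matrix (Fin 2) (Fin 2) R) = -A.adjugate := by
  ext i j
  fin_cases i <;> fin_cases j <;> simp [adjugate_fin_two, trace_fin_two]

lemma of_SgUp_eq_neg_smul_adjugate {g σ : Vec2 → Mat2} {x : Vec2} (hg : (g x).IsSymm)
    (hdet : (g x).det ≠ 0) :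
    of (SgUp g σ x) = -((g x).det⁻¹ • (σ x).adjugate) := by
  have hinv : (g x)⁻¹ * g x = 1 := nonsing_inv_mul _ hdet.isUnit
  calc of (SgUp g σ x) = (g x)⁻¹ * (σ x - trg g σ x • g x) * (g x)⁻¹ := by
        ext i j
        simp only [of_apply, SgUp, mul_apply, Finset.sum_mul, Matrix.sub_apply, Matrix.smul_apply,
          smul_eq_mul]
        exact Finset.sum_comm
    _ = ((g x)⁻¹ * σ x - ((g x)⁻¹ * σ x).trace • 1) * (g x)⁻¹ := by
        rw [mul_sub, Matrix.mul_smul, hinv, trg_eq_trace hg]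
    _ = -((σ x).adjugate * ((g x)⁻¹.adjugate * (g x)⁻¹)) := by
        rw [sub_trace_smul_one_eq_neg_adjugate, adjugate_mul_distrib, neg_mul, mul_assoc]
    _ = -((g x).det⁻¹ • (σ x).adjugate) := by
        rw [adjugate_mul, det_nonsing_inv, Ring.inverse_eq_inv', Matrix.mul_smul, mul_one]

end MatrixAlgebra

section MatrixFields

variable {g σ : Vec2 → Mat2} {x : Vec2}

lemma pd_apply_comm (hσ_symm : ∀ᶠ y in 𝓝 x, (σ y).IsSymm) (k i j : Fin 2) :
    pd k (fun y => σ y i j) x = pd k (fun y => σ y j i) x :=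
  pd_congr (hσ_symm.mono fun _ hy => hy.apply j i)

lemma pd_pd_apply_comm (hσ_symm : ∀ᶠ y in 𝓝 x, (σ y).IsSymm) (k l i j : Fin 2) :
    pd k (pd l (fun y => σ y i j)) x = pd k (pd l (fun y => σ y j i)) x :=
  pd_congr (hσ_symm.eventually_nhds.mono fun _ hy => pd_apply_comm hy l i j)

lemma differentiableAt_det (hg : ∀ i j, DifferentiableAt ℝ (fun y => g y i j) x) :
    DifferentiableAt ℝ (fun y => (g y).det) x := by
  simp only [det_fin_two]
  exact ((hg 0 0).fun_mul (hg 1 1)).fun_sub ((hg 0 1).fun_mul (hg 1 0))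

lemma eventually_det_pos (hg : ∀ i j, DifferentiableAt ℝ (fun y => g y i j) x)
    (hdet : 0 < (g x).det) : ∀ᶠ y in 𝓝 x, 0 < (g y).det :=
  (differentiableAt_det hg).continuousAt.eventually_const_lt hdet

lemma differentiableAt_inv_sqrt_det (hg : ∀ i j, DifferentiableAt ℝ (fun y => g y i j) x)
    (hdet : 0 < (g x).det) : DifferentiableAt ℝ (fun y => (√(g y).det)⁻¹) x :=
  ((differentiableAt_det hg).sqrt hdet.ne').fun_inv (Real.sqrt_pos.2 hdet).ne'

lemma eventually_differentiableAt_apply (hσ : ∀ i j, ContDiffAt ℝ 2 (fun y => σ y i j) x) :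
    ∀ᶠ y in 𝓝 x, ∀ i j, DifferentiableAt ℝ (fun z => σ z i j) y :=
  eventually_all.2 fun i => eventually_all.2 fun j =>
    ((hσ i j).eventually (by simp)).mono fun _ hy => hy.differentiableAt two_ne_zero

lemma differentiableAt_adjugate_apply (hσ : ∀ i j, DifferentiableAt ℝ (fun y => σ y i j) x)
    (i j : Fin 2) : DifferentiableAt ℝ (fun y => (σ y).adjugate i j) x := by
  simp only [adjugate_fin_two]
  fin_cases i <;> fin_cases j
  exacts [hσ 1 1, (hσ 0 1).neg, (hσ 1 0).neg, hσ 0 0]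

lemma differentiableAt_inv_apply (hg : ∀ i j, DifferentiableAt ℝ (fun y => g y i j) x)
    (hdet : (g x).det ≠ 0) (i j : Fin 2) : DifferentiableAt ℝ (fun y => (g y)⁻¹ i j) x := by
  simp only [inv_def, Ring.inverse_eq_inv', Matrix.smul_apply, smul_eq_mul]
  exact ((differentiableAt_det hg).fun_inv hdet).fun_mul (differentiableAt_adjugate_apply hg i j)

lemma pd_det (hg : ∀ i j, DifferentiableAt ℝ (fun y => g y i j) x) (k : Fin 2) :
    pd k (fun y => (g y).det) x = ∑ i, ∑ j, (g x).adjugate i j * pd k (fun y => g y j i) x := by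
  simp only [det_fin_two, adjugate_fin_two]
  rw [pd_sub ((hg 0 0).fun_mul (hg 1 1)) ((hg 0 1).fun_mul (hg 1 0)), pd_mul (hg 0 0) (hg 1 1),
    pd_mul (hg 0 1) (hg 1 0)]
  simp [Fin.sum_univ_two]
  ring

end MatrixFields

section Christoffel

variable {g : Vec2 → Mat2} {x : Vec2}

lemma Gamma1_comm (hg_symm : ∀ᶠ y in 𝓝 x, (g y).IsSymm) (i j l : Fin 2) :
    Gamma1 g x i j l = Gamma1 g x j i l := by
  rw [Gamma1, Gamma1, pd_apply_comm hg_symm i l j, pd_apply_comm hg_symm j i l,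
    pd_apply_comm hg_symm l j i]
  ring

lemma Gamma2_comm (hg_symm : ∀ᶠ y in 𝓝 x, (g y).IsSymm) (i j k : Fin 2) :
    Gamma2 g x i j k = Gamma2 g x j i k := by
  simp only [Gamma2, Gamma1_comm hg_symm i j]

lemma sum_Gamma2_self (hg_symm : ∀ᶠ y in 𝓝 x, (g y).IsSymm) (k : Fin 2) :
    ∑ l, Gamma2 g x l k l = (∑ i, ∑ j, (g x)⁻¹ i j * pd k (fun y => g y j i) x) / 2 := by
  have hinv : (g x)⁻¹ 1 0 = (g x)⁻¹ 0 1 := hg_symm.self_of_nhds.inv.apply 0 1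
  simp only [Gamma2, Gamma1, Fin.sum_univ_two, hinv]
  fin_cases k <;> simp [pd_apply_comm hg_symm _ 1 0] <;> ring

lemma pd_det_eq_Gamma2 (hg : ∀ i j, DifferentiableAt ℝ (fun y => g y i j) x)
    (hg_symm : ∀ᶠ y in 𝓝 x, (g y).IsSymm) (hdet : (g x).det ≠ 0) (k : Fin 2) :
    pd k (fun y => (g y).det) x = 2 * (g x).det * ∑ l, Gamma2 g x l k l := by
  have hadj : ∀ i j, (g x).adjugate i j = (g x).det * (g x)⁻¹ i j := fun i j => by
    rw [inv_def, Ring.inverse_eq_inv', Matrix.smul_apply, smul_eq_mul, mul_inv_cancel_left₀ hdet]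
  rw [pd_det hg, sum_Gamma2_self hg_symm]
  simp only [hadj, mul_assoc, ← Finset.mul_sum]
  ring

lemma pd_inv_det (hg : ∀ i j, DifferentiableAt ℝ (fun y => g y i j) x)
    (hg_symm : ∀ᶠ y in 𝓝 x, (g y).IsSymm) (hdet : (g x).det ≠ 0) (k : Fin 2) :
    pd k (fun y => (g y).det⁻¹) x = -2 * (g x).det⁻¹ * ∑ l, Gamma2 g x l k l := by
  rw [pd_comp (hasDerivAt_inv hdet) (differentiableAt_det hg), pd_det_eq_Gamma2 hg hg_symm hdet]
  field_simp

lemma pd_inv_sqrt_det (hg : ∀ i j, DifferentiableAt ℝ (fun y => g y i j) x)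
    (hg_symm : ∀ᶠ y in 𝓝 x, (g y).IsSymm) (hdet : 0 < (g x).det) (k : Fin 2) :
    pd k (fun y => (√(g y).det)⁻¹) x = -(√(g x).det)⁻¹ * ∑ l, Gamma2 g x l k l := by
  have hsqrt : √(g x).det ≠ 0 := (Real.sqrt_pos.2 hdet).ne'
  rw [pd_comp ((Real.hasDerivAt_sqrt hdet.ne').fun_inv hsqrt) (differentiableAt_det hg),
    pd_det_eq_Gamma2 hg hg_symm hdet.ne']
  field_simp
  rw [Real.sq_sqrt hdet.le]

lemma differentiableAt_Gamma1 (hg : ∀ i j, ContDiffAt ℝ 2 (fun y => g y i j) x) (i j l : Fin 2) :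
    DifferentiableAt ℝ (fun y => Gamma1 g y i j l) x := by
  simp only [Gamma1, div_eq_mul_inv]
  exact (((differentiableAt_pd (hg j l)).fun_add (differentiableAt_pd (hg l i))).fun_sub
    (differentiableAt_pd (hg i j))).mul_const _

lemma differentiableAt_Gamma2 (hg : ∀ i j, ContDiffAt ℝ 2 (fun y => g y i j) x)
    (hdet : (g x).det ≠ 0) (i j k : Fin 2) :
    DifferentiableAt ℝ (fun y => Gamma2 g y i j k) x :=
  have hg' : ∀ i j, DifferentiableAt ℝ (fun y => g y i j) x := fun i j =>
    (hg i j).differentiableAt two_ne_zero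
  DifferentiableAt.fun_sum fun l _ =>
    (differentiableAt_inv_apply hg' hdet k l).fun_mul (differentiableAt_Gamma1 hg i j l)

lemma pd_Gamma1 (hg : ∀ i j, ContDiffAt ℝ 2 (fun y => g y i j) x) (q i j l : Fin 2) :
    pd q (fun y => Gamma1 g y i j l) x =
      (pd q (pd i (fun y => g y j l)) x + pd q (pd j (fun y => g y l i)) x
        - pd q (pd l (fun y => g y i j)) x) / 2 := by
  have h₁ := differentiableAt_pd (i := i) (hg j l)
  have h₂ := differentiableAt_pd (i := j) (hg l i)
  have h₃ := differentiableAt_pd (i := l) (hg i j)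
  simp only [Gamma1, div_eq_inv_mul]
  rw [pd_const_mul _ ((h₁.fun_add h₂).fun_sub h₃), pd_sub (h₁.fun_add h₂) h₃, pd_add h₁ h₂]

end Christoffel

/-- The curl density `ε^{jk}(∂_j σ_{ik} - Γ^m_{ji} σ_{mk})`, which is `√(det g)` times the covariant
curl `curlg`. It is free of square roots, so that both `√(det g) div_g S_g σ` and `inc_g σ` are
expressed through it. -/
def curlDensity (g σ : Vec2 → Mat2) (x : Vec2) (i : Fin 2) : ℝ :=
  ∑ j, ∑ k, eps2 j k * (pd j (fun y => σ y i k) x - ∑ m, Gamma2 g x j i m * σ x m k)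

section CovariantOperators

variable {g σ : Vec2 → Mat2} {x : Vec2}

lemma curlg_eq_curlDensity (g σ : Vec2 → Mat2) (x : Vec2) (i : Fin 2) :
    curlg g σ x i = (√(g x).det)⁻¹ * curlDensity g σ x i := rfl

lemma differentiableAt_Gamma2_mul (hg : ∀ i j, ContDiffAt ℝ 2 (fun y => g y i j) x)
    (hσ : ∀ i j, ContDiffAt ℝ 2 (fun y => σ y i j) x) (hdet : (g x).det ≠ 0) (i j m k l : Fin 2) :
    DifferentiableAt ℝ (fun y => Gamma2 g y i j m * σ y k l) x :=
  (differentiableAt_Gamma2 hg hdet i j m).fun_mul ((hσ k l).differentiableAt two_ne_zero)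

lemma differentiableAt_curlDensity (hg : ∀ i j, ContDiffAt ℝ 2 (fun y => g y i j) x)
    (hσ : ∀ i j, ContDiffAt ℝ 2 (fun y => σ y i j) x) (hdet : (g x).det ≠ 0) (i : Fin 2) :
    DifferentiableAt ℝ (fun y => curlDensity g σ y i) x :=
  .fun_sum fun j _ => .fun_sum fun k _ => .const_mul ((differentiableAt_pd (hσ i k)).fun_sub
    (.fun_sum fun m _ => differentiableAt_Gamma2_mul hg hσ hdet j i m m k)) _

lemma pd_curlDensity (hg : ∀ i j, ContDiffAt ℝ 2 (fun y => g y i j) x)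
    (hσ : ∀ i j, ContDiffAt ℝ 2 (fun y => σ y i j) x) (hdet : (g x).det ≠ 0) (q i : Fin 2) :
    pd q (fun y => curlDensity g σ y i) x = ∑ j, ∑ k, eps2 j k *
      (pd j (pd q (fun y => σ y i k)) x - pd q (fun y => ∑ m, Gamma2 g y j i m * σ y m k) x) := by
  have hΓσ : ∀ j k, DifferentiableAt ℝ (fun y => ∑ m, Gamma2 g y j i m * σ y m k) x := fun j k =>
    .fun_sum fun m _ => differentiableAt_Gamma2_mul hg hσ hdet j i m m k
  have hcurl : ∀ j k, DifferentiableAt ℝ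
      (fun y => pd j (fun z => σ z i k) y - ∑ m, Gamma2 g y j i m * σ y m k) x := fun j k =>
    (differentiableAt_pd (hσ i k)).fun_sub (hΓσ j k)
  simp only [curlDensity]
  rw [pd_sum fun j _ => .fun_sum fun k _ => (hcurl j k).const_mul _]
  refine Finset.sum_congr rfl fun j _ => ?_
  rw [pd_sum fun k _ => (hcurl j k).const_mul _]
  refine Finset.sum_congr rfl fun k _ => ?_
  rw [pd_const_mul _ (hcurl j k), pd_sub (differentiableAt_pd (hσ i k)) (hΓσ j k),
    pd_comm (hσ i k) q j]

lemma pd_curlg (hg : ∀ i j, ContDiffAt ℝ 2 (fun y => g y i j) x)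
    (hσ : ∀ i j, ContDiffAt ℝ 2 (fun y => σ y i j) x)
    (hg_symm : ∀ᶠ y in 𝓝 x, (g y).IsSymm) (hdet : 0 < (g x).det) (q i : Fin 2) :
    pd q (fun y => curlg g σ y i) x = (√(g x).det)⁻¹ *
      (pd q (fun y => curlDensity g σ y i) x - (∑ l, Gamma2 g x l q l) * curlDensity g σ x i) := by
  have hg' : ∀ i j, DifferentiableAt ℝ (fun y => g y i j) x := fun i j =>
    (hg i j).differentiableAt two_ne_zero
  simp only [curlg_eq_curlDensity]
  rw [pd_mul (differentiableAt_inv_sqrt_det hg' hdet)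
    (differentiableAt_curlDensity hg hσ hdet.ne' i), pd_inv_sqrt_det hg' hg_symm hdet]
  ring

lemma incg_eq_sum_pd_curlg (hg : ∀ i j, ContDiffAt ℝ 2 (fun y => g y i j) x)
    (hσ : ∀ i j, ContDiffAt ℝ 2 (fun y => σ y i j) x)
    (hg_symm : ∀ᶠ y in 𝓝 x, (g y).IsSymm) (hdet : 0 < (g x).det) :
    incg g σ x = (√(g x).det)⁻¹ * ∑ q, ∑ i, eps2 q i * pd q (fun y => curlg g σ y i) x := by
  have hsqrt : (g x).det⁻¹ = (√(g x).det)⁻¹ * (√(g x).det)⁻¹ := by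
    rw [← mul_inv, Real.mul_self_sqrt hdet.le]
  rw [incg, hsqrt, mul_assoc]
  congr 1
  simp only [pd_curlg hg hσ hg_symm hdet, pd_curlDensity hg hσ hdet.ne']
  simp only [curlDensity, ← Finset.sum_sub_distrib, Finset.mul_sum]
  refine Finset.sum_congr rfl fun q _ => Finset.sum_congr rfl fun i _ =>
    Finset.sum_congr rfl fun j _ => Finset.sum_congr rfl fun k _ => ?_
  ring

lemma pd_SgUp (hg : ∀ i j, DifferentiableAt ℝ (fun y => g y i j) x)
    (hσ : ∀ i j, DifferentiableAt ℝ (fun y => σ y i j) x)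
    (hg_symm : ∀ᶠ y in 𝓝 x, (g y).IsSymm) (hdet : 0 < (g x).det) (k i j : Fin 2) :
    pd k (fun y => SgUp g σ y i j) x = (g x).det⁻¹ *
      (2 * (∑ l, Gamma2 g x l k l) * (σ x).adjugate i j
        - pd k (fun y => (σ y).adjugate i j) x) := by
  have hS : (fun y => SgUp g σ y i j) =ᶠ[𝓝 x] fun y => -((g y).det⁻¹ * (σ y).adjugate i j) := by
    filter_upwards [hg_symm, eventually_det_pos hg hdet] with y hy_symm hy_det
    exact congr_fun₂ (of_SgUp_eq_neg_smul_adjugate hy_symm hy_det.ne') i j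
  have hinv : DifferentiableAt ℝ (fun y => (g y).det⁻¹) x :=
    (differentiableAt_det hg).fun_inv hdet.ne'
  rw [pd_congr hS, pd_neg, pd_mul hinv (differentiableAt_adjugate_apply hσ i j),
    pd_inv_det hg hg_symm hdet.ne']
  ring

lemma divgSg_eq_adjugate (hg : ∀ i j, DifferentiableAt ℝ (fun y => g y i j) x)
    (hσ : ∀ i j, DifferentiableAt ℝ (fun y => σ y i j) x)
    (hg_symm : ∀ᶠ y in 𝓝 x, (g y).IsSymm) (hdet : 0 < (g x).det) (i : Fin 2) :
    divgSg g σ x i = (g x).det⁻¹ *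
      ((∑ j, ((∑ l, Gamma2 g x l j l) * (σ x).adjugate i j
          - pd j (fun y => (σ y).adjugate i j) x))
        - ∑ l, ∑ j, Gamma2 g x l j i * (σ x).adjugate l j) := by
  have hS : ∀ i j, SgUp g σ x i j = -((g x).det⁻¹ * (σ x).adjugate i j) := fun i j =>
    congr_fun₂ (of_SgUp_eq_neg_smul_adjugate hg_symm.self_of_nhds hdet.ne') i j
  simp only [divgSg, pd_SgUp hg hσ hg_symm hdet, hS, Fin.sum_univ_two]
  ring

lemma sum_eps2_mul_curlDensity (hg_symm : ∀ᶠ y in 𝓝 x, (g y).IsSymm)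
    (hσ_symm : ∀ᶠ y in 𝓝 x, (σ y).IsSymm) (i : Fin 2) :
    ∑ j, eps2 i j * curlDensity g σ x j =
      (∑ l, ∑ j, Gamma2 g x l j i * (σ x).adjugate l j)
        - ∑ j, ((∑ l, Gamma2 g x l j l) * (σ x).adjugate i j
            - pd j (fun y => (σ y).adjugate i j) x) := by
  have hσ : σ x 1 0 = σ x 0 1 := hσ_symm.self_of_nhds.apply 0 1
  have hΓ : ∀ k, Gamma2 g x 1 0 k = Gamma2 g x 0 1 k := Gamma2_comm hg_symm 1 0
  fin_cases i <;>
    simp [curlDensity, Fin.sum_univ_two, eps2, adjugate_fin_two, pd_neg, hσ, hΓ,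
      pd_apply_comm hσ_symm _ 1 0] <;>
    ring

lemma sqrt_det_mul_divgSg (hg : ∀ i j, DifferentiableAt ℝ (fun y => g y i j) x)
    (hσ : ∀ i j, DifferentiableAt ℝ (fun y => σ y i j) x)
    (hg_symm : ∀ᶠ y in 𝓝 x, (g y).IsSymm) (hσ_symm : ∀ᶠ y in 𝓝 x, (σ y).IsSymm)
    (hdet : 0 < (g x).det) (i : Fin 2) :
    √(g x).det * divgSg g σ x i = -∑ j, eps2 i j * curlg g σ x j := by
  have hsqrt : √(g x).det * (g x).det⁻¹ = (√(g x).det)⁻¹ := by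
    rw [← div_eq_mul_inv, Real.sqrt_div_self', one_div]
  simp only [curlg_eq_curlDensity, mul_left_comm (eps2 _ _), ← Finset.mul_sum]
  rw [divgSg_eq_adjugate hg hσ hg_symm hdet, sum_eps2_mul_curlDensity hg_symm hσ_symm,
    ← mul_assoc, hsqrt]
  ring

lemma divgdivgSg_eq_neg_incg (hg : ∀ i j, ContDiffAt ℝ 2 (fun y => g y i j) x)
    (hσ : ∀ i j, ContDiffAt ℝ 2 (fun y => σ y i j) x)
    (hg_symm : ∀ᶠ y in 𝓝 x, (g y).IsSymm) (hσ_symm : ∀ᶠ y in 𝓝 x, (σ y).IsSymm)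
    (hdet : 0 < (g x).det) : divgdivgSg g σ x = -incg g σ x := by
  have hg' : ∀ᶠ y in 𝓝 x, ∀ i j, DifferentiableAt ℝ (fun z => g z i j) y :=
    eventually_differentiableAt_apply hg
  have hdiv : ∀ i, (fun y => √(g y).det * divgSg g σ y i) =ᶠ[𝓝 x]
      fun y => -∑ j, eps2 i j * curlg g σ y j := by
    intro i
    filter_upwards [hg', eventually_differentiableAt_apply hσ, hg_symm.eventually_nhds,
      hσ_symm.eventually_nhds, eventually_det_pos hg'.self_of_nhds hdet]
      with y hgy hσy hgy_symm hσy_symm hy_det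
    exact sqrt_det_mul_divgSg hgy hσy hgy_symm hσy_symm hy_det i
  have hcurl : ∀ j, DifferentiableAt ℝ (fun y => curlg g σ y j) x := fun j =>
    (differentiableAt_inv_sqrt_det hg'.self_of_nhds hdet).fun_mul
      (differentiableAt_curlDensity hg hσ hdet.ne' j)
  have hpd : ∀ i, pd i (fun y => √(g y).det * divgSg g σ y i) x =
      -∑ j, eps2 i j * pd i (fun y => curlg g σ y j) x := fun i => by
    rw [pd_congr (hdiv i), pd_neg, pd_sum fun j _ => (hcurl j).const_mul _]
    simp only [pd_const_mul _ (hcurl _)]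
  rw [divgdivgSg, incg_eq_sum_pd_curlg hg hσ hg_symm hdet]
  simp only [hpd, Finset.sum_neg_distrib, mul_neg]

end CovariantOperators

section CriticalPoint

variable {g σ : Vec2 → Mat2} {x : Vec2}

lemma sum_eps2_mul_pd_pd (hσ : ∀ i j, ContDiffAt ℝ 2 (fun y => σ y i j) x)
    (hσ_symm : ∀ᶠ y in 𝓝 x, (σ y).IsSymm) :
    ∑ q, ∑ i, ∑ j, ∑ k, eps2 q i * eps2 j k * pd j (pd q (fun y => σ y i k)) x = incE σ x := by
  simp only [Fin.sum_univ_two, incE, pd_pd_apply_comm hσ_symm _ _ 1 0, pd_comm (hσ 0 1) 1 0]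
  simp [eps2]
  ring

/-- Only the part of `∂_q Γ_{jil}` antisymmetric in both `(q, i)` and `(j, l)` survives. -/
lemma sum_eps2_mul_pd_Gamma1 (hg : ∀ i j, ContDiffAt ℝ 2 (fun y => g y i j) x)
    (hg_symm : ∀ᶠ y in 𝓝 x, (g y).IsSymm) (k l : Fin 2) :
    ∑ q, ∑ i, ∑ j, eps2 q i * eps2 j k * pd q (fun y => Gamma1 g y j i l) x =
      (1 : Mat2) k l * incE g x / 2 := by
  have hcomm : ∀ i j, pd 1 (pd 0 (fun y => g y i j)) x = pd 0 (pd 1 (fun y => g y i j)) x :=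
    fun i j => pd_comm (hg i j) 1 0
  simp only [Fin.sum_univ_two, pd_Gamma1 hg, incE]
  fin_cases k <;> fin_cases l <;>
    simp [eps2, pd_pd_apply_comm hg_symm _ _ 1 0, hcomm] <;> ring

lemma Gamma1_eq_zero (hdg : ∀ i j k, pd k (fun y => g y i j) x = 0) (i j l : Fin 2) :
    Gamma1 g x i j l = 0 := by
  simp [Gamma1, hdg]

lemma Gamma2_eq_zero (hdg : ∀ i j k, pd k (fun y => g y i j) x = 0) (i j k : Fin 2) :
    Gamma2 g x i j k = 0 := by
  simp [Gamma2, Gamma1_eq_zero hdg]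

lemma pd_Gamma2_of_pd_eq_zero (hg : ∀ i j, ContDiffAt ℝ 2 (fun y => g y i j) x)
    (hdet : (g x).det ≠ 0) (hdg : ∀ i j k, pd k (fun y => g y i j) x = 0) (q i j k : Fin 2) :
    pd q (fun y => Gamma2 g y i j k) x =
      ∑ l, (g x)⁻¹ k l * pd q (fun y => Gamma1 g y i j l) x := by
  have hinv : ∀ l, DifferentiableAt ℝ (fun y => (g y)⁻¹ k l) x :=
    differentiableAt_inv_apply (fun i j => (hg i j).differentiableAt two_ne_zero) hdet k
  simp only [Gamma2]
  rw [pd_sum fun l _ => (hinv l).fun_mul (differentiableAt_Gamma1 hg i j l)]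
  simp only [pd_mul (hinv _) (differentiableAt_Gamma1 hg i j _), Gamma1_eq_zero hdg, mul_zero,
    add_zero]

lemma pd_sum_Gamma2_mul_of_pd_eq_zero (hg : ∀ i j, ContDiffAt ℝ 2 (fun y => g y i j) x)
    (hσ : ∀ i j, ContDiffAt ℝ 2 (fun y => σ y i j) x) (hdet : (g x).det ≠ 0)
    (hdg : ∀ i j k, pd k (fun y => g y i j) x = 0) (q i j k : Fin 2) :
    pd q (fun y => ∑ m, Gamma2 g y j i m * σ y m k) x =
      ∑ m, ∑ l, (g x)⁻¹ m l * σ x m k * pd q (fun y => Gamma1 g y j i l) x := by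
  rw [pd_sum fun m _ => differentiableAt_Gamma2_mul hg hσ hdet j i m m k]
  refine Finset.sum_congr rfl fun m _ => ?_
  rw [pd_mul (differentiableAt_Gamma2 hg hdet j i m) ((hσ m k).differentiableAt two_ne_zero),
    Gamma2_eq_zero hdg, pd_Gamma2_of_pd_eq_zero hg hdet hdg, zero_mul, zero_add, Finset.sum_mul]
  simp only [mul_right_comm]

lemma incg_of_pd_eq_zero (hg : ∀ i j, ContDiffAt ℝ 2 (fun y => g y i j) x)
    (hσ : ∀ i j, ContDiffAt ℝ 2 (fun y => σ y i j) x)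
    (hg_symm : ∀ᶠ y in 𝓝 x, (g y).IsSymm) (hσ_symm : ∀ᶠ y in 𝓝 x, (σ y).IsSymm)
    (hdet : (g x).det ≠ 0) (hdg : ∀ i j k, pd k (fun y => g y i j) x = 0) :
    incg g σ x = (g x).det⁻¹ * (incE σ x - 1 / 2 * trg g σ x * incE g x) := by
  have hΓσ : ∑ q, ∑ i, ∑ j, ∑ k, eps2 q i * eps2 j k *
      pd q (fun y => ∑ m, Gamma2 g y j i m * σ y m k) x = 1 / 2 * trg g σ x * incE g x := by
    calc
      _ = ∑ k, ∑ l, ∑ m, (g x)⁻¹ m l * σ x m k *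
          ∑ q, ∑ i, ∑ j, eps2 q i * eps2 j k * pd q (fun y => Gamma1 g y j i l) x := by
          simp only [pd_sum_Gamma2_mul_of_pd_eq_zero hg hσ hdet hdg]
          simp only [Fin.sum_univ_two]
          ring
      _ = 1 / 2 * trg g σ x * incE g x := by
          simp only [sum_eps2_mul_pd_Gamma1 hg hg_symm]
          simp [Fin.sum_univ_two, trg]
          ring
  rw [incg, sum_eps2_mul_pd_pd hσ hσ_symm, hΓσ]
  simp [Gamma2_eq_zero hdg]

end CriticalPoint

theorem divgdivgSg_normal_coords_general {g σ : Vec2 → Mat2} {p : Vec2}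
    (hg : ∀ i j, ContDiffAt ℝ 2 (fun y => g y i j) p)
    (hσ : ∀ i j, ContDiffAt ℝ 2 (fun y => σ y i j) p)
    (hg_symm : ∀ᶠ y in 𝓝 p, (g y).IsSymm) (hσ_symm : ∀ᶠ y in 𝓝 p, (σ y).IsSymm)
    (hdet : 0 < (g p).det) :
    ((∀ i j k, pd k (fun y => g y i j) p = 0) →
      divgdivgSg g σ p = (g p).det⁻¹ * (-incE σ p + 1 / 2 * trg g σ p * incE g p)) ∧
    divgdivgSg g σ p = -incg g σ p := by
  have hinc : divgdivgSg g σ p = -incg g σ p :=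
    divgdivgSg_eq_neg_incg hg hσ hg_symm hσ_symm hdet
  refine ⟨fun hdg => ?_, hinc⟩
  rw [hinc, incg_of_pd_eq_zero hg hσ hg_symm hσ_symm hdet.ne' hdg]
  ring

/-- `div_g div_g S_g σ = -inc σ + ½ tr σ inc g = -inc_g σ` in
Riemann normal coordinates. -/
theorem divgdivgSg_normal_coords
    (Ω : Set Vec2) (hΩ : IsOpen Ω)
    (g σ : Vec2 → Mat2)
    (hg : ∀ i j, ContDiffOn ℝ 2 (fun y => g y i j) Ω)
    (hσ : ∀ i j, ContDiffOn ℝ 2 (fun y => σ y i j) Ω)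
    (hg_symm : ∀ x ∈ Ω, (g x).IsSymm) (hσ_symm : ∀ x ∈ Ω, (σ x).IsSymm)
    (hg_pos : ∀ x ∈ Ω, (g x).PosDef)
    (p : Vec2) (hp : p ∈ Ω) (hgp : g p = 1)
    (hdg : ∀ i j k, pd k (fun y => g y i j) p = 0) :
    divgdivgSg g σ p = -incE σ p + 1 / 2 * (σ p).trace * incE g p ∧
    divgdivgSg g σ p = -incg g σ p := by
  have hΩp : Ω ∈ 𝓝 p := hΩ.mem_nhds hp
  have htr : trg g σ p = (σ p).trace := by
    rw [trg_eq_trace (hg_symm p hp), hgp, inv_one, one_mul]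
  have h := divgdivgSg_normal_coords_general (fun i j => (hg i j).contDiffAt hΩp)
    (fun i j => (hσ i j).contDiffAt hΩp) (eventually_of_mem hΩp hg_symm)
    (eventually_of_mem hΩp hσ_symm) (hg_pos p hp).det_pos
  exact ⟨by simpa [hgp, htr] using h.1 hdg, h.2⟩
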